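/- arXiv:1110.5369 — 2 statements merged into one kernel-verified Lean document; each statement's English description precedes it below -/
import Mathlib

section
/- If the arrangement 𝒜 is central (each ω_i is a nonzero linear form), then the kernel 𝓘₁ of the ℚ-algebra homomorphism ψ : ℚ[e_1,…,e_n] → H⁰(M_1(𝒜)) sending e_i to the Heaviside function x_i is generated by the two families: (1) e_i² − e_i for all i; (3) ∏_{i∈S⁺} e_i · ∏_{j∈S⁻} (e_j − 1) − ∏_{i∈S⁺} (e_i − 1) · ∏_{j∈S⁻} e_j for all pairs of disjoint subsets S⁺, S⁻ ⊆ {1,…,n} such that ⋂_{i∈S⁺} H_i⁺ ∩ ⋂_{j∈S⁻} H_j⁻ = ∅. -/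
/-!
Modulo the relations `e i ^ 2 = e i`, the polynomial ring becomes the ring of `ℚ`-valued functions
on the cube `{0,1}ⁿ`, with the cube idempotents `δ_ε` as indicator functions: they sum to `1`
(`sum_cubeIdem`), and `p * δ_ε ≡ p(ε) δ_ε` (`mul_cubeIdem_sub_mem`). An ideal containing these
relations is therefore determined by the set of vertices at which it vanishes, and it suffices to
see that family (3) vanishes exactly at the sign vectors of chambers.

At a point `v` of the complement the two products in a relation of family (3) are nonzero only if
`v`, respectively `-v`, lies in the given intersection of half-spaces, which is empty; here
centrality enters. Conversely, if no chamber has sign vector `ε`, then taking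
`S⁺ = {ε = 1}` and `S⁻ = {ε = 0}` gives a relation of family (3) whose value at `ε` is `±1`: its
second product vanishes there because `S⁺ ∪ S⁻` is nonempty, the empty intersection of half-spaces
being all of `V`.
-/

open MvPolynomial Set

variable {V : Type*} [NormedAddCommGroup V] [NormedSpace ℝ V] [FiniteDimensional ℝ V]
variable {n : ℕ}

/-- The complement `M₁(𝒜)` of the central arrangement given by the linear forms `ω i`. -/
def M₁ (ω : Fin n → V →ₗ[ℝ] ℝ) : Set V := {v | ∀ i, ω i v ≠ 0}

/-- The positive open half-space `H i⁺`. -/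
def Hplus (ω : Fin n → V →ₗ[ℝ] ℝ) (i : Fin n) : Set V := {v | 0 < ω i v}

/-- The negative open half-space `H i⁻`. -/
def Hminus (ω : Fin n → V →ₗ[ℝ] ℝ) (i : Fin n) : Set V := {v | ω i v < 0}

/-- The Heaviside function `x i` on `M₁(𝒜)`: `1` on `H i⁺` and `0` on `H i⁻`. -/
noncomputable def heaviside (ω : Fin n → V →ₗ[ℝ] ℝ) (i : Fin n) :
    LocallyConstant (M₁ ω) ℚ where
  toFun v := if 0 < ω i v.1 then 1 else 0
  isLocallyConstant := by
    rw [IsLocallyConstant.iff_exists_open]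
    rintro ⟨v, hv⟩
    rcases lt_or_gt_of_ne (hv i) with h | h
    · refine ⟨{w : M₁ ω | ω i w.1 < 0}, ?_, h, fun w hw => ?_⟩
      · exact (isOpen_lt ((ω i).continuous_of_finiteDimensional.comp
          continuous_subtype_val) continuous_const)
      · simp only [Set.mem_setOf_eq] at hw
        simp [not_lt.mpr hw.le, not_lt.mpr h.le]
    · refine ⟨{w : M₁ ω | 0 < ω i w.1}, ?_, h, fun w hw => ?_⟩
      · exact (isOpen_lt continuous_const ((ω i).continuous_of_finiteDimensional.comp
          continuous_subtype_val))
      · simp only [Set.mem_setOf_eq] at hw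
        simp [hw, h]

/-- Family (1): `e i ^ 2 - e i`. -/
def fam1 (n : ℕ) : Set (MvPolynomial (Fin n) ℚ) :=
  {p | ∃ i : Fin n, p = X i ^ 2 - X i}

/-- Family (3): `∏_{i∈S⁺} e i ∏_{j∈S⁻} (e j - 1) - ∏_{i∈S⁺} (e i - 1) ∏_{j∈S⁻} e j`
for disjoint `S⁺`, `S⁻` with `⋂_{i∈S⁺} H i⁺ ∩ ⋂_{j∈S⁻} H j⁻ = ∅`. -/
def fam3 (ω : Fin n → V →ₗ[ℝ] ℝ) : Set (MvPolynomial (Fin n) ℚ) :=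
  {p | ∃ Sp Sm : Finset (Fin n), Disjoint Sp Sm ∧
    (⋂ i ∈ Sp, Hplus ω i) ∩ (⋂ j ∈ Sm, Hminus ω j) = ∅ ∧
    p = (∏ i ∈ Sp, X i) * (∏ j ∈ Sm, (X j - 1)) -
      (∏ i ∈ Sp, (X i - 1)) * ∏ j ∈ Sm, X j}

/-- The vertex of the cube `{0,1}ⁿ ⊆ ℚⁿ` with coordinates prescribed by `ε`. -/
def cubePt (ε : Fin n → Bool) (i : Fin n) : ℚ := if ε i then 1 else 0

/-- The polynomial `∏_{ε i = 1} e i ∏_{ε i = 0} (1 - e i)`, whose restriction to the cube `{0,1}ⁿ`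
is the indicator function of the vertex `ε`. -/
noncomputable def cubeIdem (ε : Fin n → Bool) : MvPolynomial (Fin n) ℚ :=
  ∏ i, if ε i then X i else 1 - X i

lemma sum_cubeIdem : ∑ ε : Fin n → Bool, cubeIdem ε = 1 := by
  have h := Finset.prod_univ_sum (fun _ : Fin n => (Finset.univ : Finset Bool))
    (fun i b => if b then (X i : MvPolynomial (Fin n) ℚ) else 1 - X i)
  simp only [Fintype.piFinset_univ] at h
  unfold cubeIdem
  rw [← h]
  simp

lemma X_mul_cubeIdem_sub_mem (ε : Fin n → Bool) (i : Fin n) :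
    X i * cubeIdem ε - C (cubePt ε i) * cubeIdem ε ∈ Ideal.span (fam1 n) := by
  have hgen : (X i ^ 2 - X i : MvPolynomial (Fin n) ℚ) ∈ Ideal.span (fam1 n) :=
    Ideal.subset_span ⟨i, rfl⟩
  obtain ⟨r, hr⟩ := Finset.dvd_prod_of_mem
    (fun i => if ε i then (X i : MvPolynomial (Fin n) ℚ) else 1 - X i) (Finset.mem_univ i)
  change cubeIdem ε = _ at hr
  rw [hr]
  by_cases h : ε i
  · convert Ideal.mul_mem_left _ r hgen using 1
    simp [cubePt, h]
    ring
  · convert Ideal.mul_mem_left _ (-r) hgen using 1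
    simp [cubePt, h]
    ring

lemma mul_cubeIdem_sub_mem (ε : Fin n → Bool) (p : MvPolynomial (Fin n) ℚ) :
    p * cubeIdem ε - C (eval (cubePt ε) p) * cubeIdem ε ∈ Ideal.span (fam1 n) := by
  induction p using MvPolynomial.induction_on with
  | C a => simp
  | add p q hp hq =>
    convert Ideal.add_mem _ hp hq using 1
    simp only [map_add]
    ring
  | mul_X p i hp =>
    convert Ideal.add_mem _ (Ideal.mul_mem_left _ (X i) hp)
      (Ideal.mul_mem_left _ (C (eval (cubePt ε) p)) (X_mul_cubeIdem_sub_mem ε i)) using 1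
    simp only [map_mul, eval_X]
    ring

lemma aeval_heaviside_apply (ω : Fin n → V →ₗ[ℝ] ℝ) (p : MvPolynomial (Fin n) ℚ) (v : M₁ ω) :
    (aeval (R := ℚ) (heaviside ω) p) v = eval (fun i => heaviside ω i v) p := by
  induction p using MvPolynomial.induction_on with
  | C a => simp
  | add p q hp hq => simp [hp, hq]
  | mul_X p i hp => simp [hp]

lemma heaviside_apply (ω : Fin n → V →ₗ[ℝ] ℝ) (i : Fin n) (v : M₁ ω) :
    heaviside ω i v = if 0 < ω i v.1 then 1 else 0 := rfl

lemma mem_ker_iff (ω : Fin n → V →ₗ[ℝ] ℝ) (p : MvPolynomial (Fin n) ℚ) :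
    p ∈ RingHom.ker (MvPolynomial.aeval (R := ℚ) (heaviside ω)).toRingHom ↔
      ∀ v : M₁ ω, eval (fun i => heaviside ω i v) p = 0 := by
  rw [RingHom.mem_ker]
  change aeval (R := ℚ) (heaviside ω) p = 0 ↔ _
  simp_rw [← aeval_heaviside_apply]
  exact ⟨fun h v => by rw [h]; rfl, fun h => LocallyConstant.ext h⟩

/-- Family (3) vanishes on the complement: the first product is supported on the given
intersection of half-spaces and the second on its antipode. -/
lemma fam3_subset_ker (ω : Fin n → V →ₗ[ℝ] ℝ) {p : MvPolynomial (Fin n) ℚ} (hp : p ∈ fam3 ω) :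
    p ∈ RingHom.ker (MvPolynomial.aeval (R := ℚ) (heaviside ω)).toRingHom := by
  obtain ⟨Sp, Sm, -, hE, rfl⟩ := hp
  rw [mem_ker_iff]
  rintro ⟨v, hv⟩
  -- Used for `w = v` and, by centrality, for `w = -v`.
  have key : ∀ w : V, (∃ i ∈ Sp, ¬ 0 < ω i w) ∨ (∃ j ∈ Sm, ¬ ω j w < 0) := by
    intro w
    by_contra! h
    have : w ∈ (⋂ i ∈ Sp, Hplus ω i) ∩ (⋂ j ∈ Sm, Hminus ω j) := by
      simpa [Hplus, Hminus] using h
    simp [hE] at this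
  have h1 : (∏ i ∈ Sp, heaviside ω i ⟨v, hv⟩) * (∏ j ∈ Sm, (heaviside ω j ⟨v, hv⟩ - 1)) = 0 := by
    rcases key v with ⟨i, hi, h⟩ | ⟨j, hj, h⟩
    · rw [Finset.prod_eq_zero hi (by simp [heaviside_apply, h]), zero_mul]
    · have := lt_of_le_of_ne (not_lt.mp h) (hv j).symm
      rw [Finset.prod_eq_zero hj (by simp [heaviside_apply, this]), mul_zero]
  have h2 : (∏ i ∈ Sp, (heaviside ω i ⟨v, hv⟩ - 1)) * (∏ j ∈ Sm, heaviside ω j ⟨v, hv⟩) = 0 := by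
    rcases key (-v) with ⟨i, hi, h⟩ | ⟨j, hj, h⟩
    · have : 0 < ω i v := lt_of_le_of_ne (by simpa using h) (hv i).symm
      rw [Finset.prod_eq_zero hi (by simp [heaviside_apply, this]), zero_mul]
    · have : ¬ 0 < ω j v := by simpa using h
      rw [Finset.prod_eq_zero hj (by simp [heaviside_apply, this]), mul_zero]
  simp [map_prod, h1, h2]

/-- A sign vector that is not realised by a chamber is separated from the zero set of family (3). -/
lemma exists_fam3_eval_ne_zero (ω : Fin n → V →ₗ[ℝ] ℝ) (ε : Fin n → Bool)
    (hε : ¬ ∃ v : M₁ ω, (fun i => heaviside ω i v) = cubePt ε) :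
    ∃ f ∈ fam3 ω, eval (cubePt ε) f ≠ 0 := by
  set Sp : Finset (Fin n) := Finset.univ.filter (fun i => ε i = true) with hSp
  set Sm : Finset (Fin n) := Finset.univ.filter (fun i => ε i = false) with hSm
  have hempty : (⋂ i ∈ Sp, Hplus ω i) ∩ (⋂ j ∈ Sm, Hminus ω j) = ∅ := by
    rw [Set.eq_empty_iff_forall_notMem]
    intro v hv
    simp only [hSp, hSm, Hplus, Hminus, Set.mem_inter_iff, Set.mem_iInter, Finset.mem_filter,
      Finset.mem_univ, true_and, Set.mem_ofPred_eq] at hv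
    refine hε ⟨⟨v, fun i => ?_⟩, funext fun i => ?_⟩
    · cases h : ε i
      · exact (hv.2 i h).ne
      · exact (hv.1 i h).ne'
    · cases h : ε i
      · simp [heaviside_apply, cubePt, h, (hv.2 i h).le]
      · simp [heaviside_apply, cubePt, h, hv.1 i h]
  refine ⟨_, ⟨Sp, Sm, ?_, hempty, rfl⟩, ?_⟩
  · rw [Finset.disjoint_left]
    intro i hi hi'
    simp [hSp, hSm] at hi hi'
    simp [hi] at hi'
  -- If `n = 0`, the intersection would be all of `V`, which contains `0`.
  have hn : ∃ i : Fin n, True := by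
    by_contra! h
    have : (0 : V) ∈ (⋂ i ∈ Sp, Hplus ω i) ∩ (⋂ j ∈ Sm, Hminus ω j) := by
      simp only [Set.mem_inter_iff, Set.mem_iInter]
      exact ⟨fun i => (h i).elim, fun i => (h i).elim⟩
    simp [hempty] at this
  obtain ⟨i₀, -⟩ := hn
  have h2 : (∏ i ∈ Sp, (cubePt ε i - 1)) * (∏ j ∈ Sm, cubePt ε j) = 0 := by
    cases h : ε i₀
    · rw [Finset.prod_eq_zero (s := Sm) (i := i₀) (by simp [hSm, h]) (by simp [cubePt, h]),
        mul_zero]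
    · rw [Finset.prod_eq_zero (s := Sp) (i := i₀) (by simp [hSp, h]) (by simp [cubePt, h]),
        zero_mul]
  have h1 : (∏ i ∈ Sp, cubePt ε i) * (∏ j ∈ Sm, (cubePt ε j - 1)) ≠ 0 := by
    refine mul_ne_zero (Finset.prod_ne_zero_iff.mpr fun i hi => ?_)
      (Finset.prod_ne_zero_iff.mpr fun i hi => ?_)
    · have : ε i = true := by simpa [hSp] using hi
      simp [cubePt, this]
    · have : ε i = false := by simpa [hSm] using hi
      simp [cubePt, this]
  simpa [map_prod, h2] using h1

/-- For a central arrangement, the kernel of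
`ψ : ℚ[e₁,…,eₙ] → H⁰(M₁(𝒜))` is generated by families (1) and (3). -/
theorem vg_kernel_central (ω : Fin n → V →ₗ[ℝ] ℝ) (hω : ∀ i, ω i ≠ 0) :
    RingHom.ker (MvPolynomial.aeval (R := ℚ) (heaviside ω)).toRingHom =
      Ideal.span (fam1 n ∪ fam3 ω) := by
  apply le_antisymm
  · intro p hp
    rw [mem_ker_iff] at hp
    have hle : Ideal.span (fam1 n) ≤ Ideal.span (fam1 n ∪ fam3 ω) :=
      Ideal.span_mono Set.subset_union_left
    rw [← mul_one p, ← sum_cubeIdem, Finset.mul_sum]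
    refine Ideal.sum_mem _ fun ε _ => ?_
    by_cases hε : ∃ v : M₁ ω, (fun i => heaviside ω i v) = cubePt ε
    · obtain ⟨v, hv⟩ := hε
      have h := mul_cubeIdem_sub_mem ε p
      rw [← hv, hp v, map_zero, zero_mul, sub_zero] at h
      exact hle h
    · obtain ⟨f, hf, hne⟩ := exists_fam3_eval_ne_zero ω ε hε
      refine Ideal.mul_mem_left _ _ ?_
      have hfI : f * cubeIdem ε ∈ Ideal.span (fam1 n ∪ fam3 ω) :=
        Ideal.mul_mem_right _ _ (Ideal.subset_span (Or.inr hf))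
      have h := Ideal.sub_mem _ hfI (hle (mul_cubeIdem_sub_mem ε f))
      rw [sub_sub_cancel] at h
      -- The scalar `f(ε)` is invertible, so the idempotent itself lies in the ideal.
      have h' := Ideal.mul_mem_left _ (C (eval (cubePt ε) f)⁻¹) h
      rwa [← mul_assoc, ← C_mul, inv_mul_cancel₀ hne, C_1, one_mul] at h'
  · rw [Ideal.span_le]
    rintro p (⟨i, rfl⟩ | hp)
    · rw [SetLike.mem_coe, mem_ker_iff]
      intro v
      by_cases h : 0 < ω i v.1 <;> simp [heaviside_apply, h]
    · exact fam3_subset_ker ω hp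
end

section
/- Let 𝒜 = {H_1,…,H_n} be a central hyperplane arrangement given by nonzero, pairwise non-proportional linear forms ω_1,…,ω_n on a finite-dimensional real vector space V. Let 𝒞(𝒜) be the collection of signed subsets X = (X⁺, X⁻) of {1,…,n} such that ⋂_{i∈X⁺} H_i⁺ ∩ ⋂_{j∈X⁻} H_j⁻ = ∅ and such that X is minimal with this property (every signed subset Y with support strictly contained in the support of X satisfies ⋂_{i∈Y⁺} H_i⁺ ∩ ⋂_{j∈Y⁻} H_j⁻ ≠ ∅). Then 𝒞(𝒜) satisfies the four signed-circuit axioms of a loop-free oriented matroid on {1,…,n}. -/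
/-!
By Gordan's theorem of the alternative (`exists_dependency`, `infeasible_of_dependency`), the region
cut out by a signed subset `X` is empty iff there is a nonzero linear dependency `∑ λ i • ω i = 0`
whose positive part lies in `X⁺` and whose negative part lies in `X⁻`.  By minimality, a circuit is
therefore exactly the sign pattern of a dependency of minimal support
(`exists_exact`, `dependency_eq_zero`), and dependencies of minimal support with the same support
are proportional (`eq_smul`).  This gives the axioms on supports at once.

For elimination of `e` between `X` and `Y`, a positive combination of the two dependencies
kills the coefficient at `e`; it is nonzero because `X ≠ -Y`.  The sign pattern
of any nonzero dependency contains a circuit (`exists_circuit_conform`): subtracting from it the right multiple of a dependency with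
strictly smaller support shrinks the support without creating new signs.
-/

open Set

variable {V : Type*} [NormedAddCommGroup V] [NormedSpace ℝ V] [FiniteDimensional ℝ V]
variable {n : ℕ}

/-- The signed circuits of the arrangement: signed subsets `X = (X⁺, X⁻)` with
`⋂_{i∈X⁺} H i⁺ ∩ ⋂_{j∈X⁻} H j⁻ = ∅`, minimal in the sense that every signed subset
with strictly smaller support has nonempty corresponding intersection. -/
def signedCircuits (ω : Fin n → V →ₗ[ℝ] ℝ) : Set (Finset (Fin n) × Finset (Fin n)) :=
  {X | Disjoint X.1 X.2 ∧
    (⋂ i ∈ X.1, Hplus ω i) ∩ (⋂ j ∈ X.2, Hminus ω j) = ∅ ∧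
    ∀ Y : Finset (Fin n) × Finset (Fin n), Disjoint Y.1 Y.2 →
      Y.1 ∪ Y.2 ⊂ X.1 ∪ X.2 →
      ((⋂ i ∈ Y.1, Hplus ω i) ∩ (⋂ j ∈ Y.2, Hminus ω j)).Nonempty}

/-- The coefficients `l` form a linear dependency among the forms `ω i`. -/
def IsDep (ω : Fin n → V →ₗ[ℝ] ℝ) (l : Fin n → ℝ) : Prop := ∑ i, l i • ω i = 0

/-- The sign pattern of `l` is contained in the signed set `X`: positive entries occur only
in `X⁺` and negative entries only in `X⁻`. -/
def Conform (l : Fin n → ℝ) (X : Finset (Fin n) × Finset (Fin n)) : Prop :=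
  ∀ i, (0 < l i → i ∈ X.1) ∧ (l i < 0 → i ∈ X.2)

lemma IsDep.apply {ω : Fin n → V →ₗ[ℝ] ℝ} {l : Fin n → ℝ} (h : IsDep ω l) (v : V) :
    ∑ i, l i * ω i v = 0 := by
  have := congrArg (fun f : V →ₗ[ℝ] ℝ => f v) h
  simpa [LinearMap.sum_apply] using this

lemma IsDep.comb {ω : Fin n → V →ₗ[ℝ] ℝ} {l m : Fin n → ℝ} (hl : IsDep ω l)
    (hm : IsDep ω m) (a b : ℝ) : IsDep ω (fun i => a * l i + b * m i) := by
  unfold IsDep at *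
  simp only [add_smul, mul_smul, Finset.sum_add_distrib, ← Finset.smul_sum, hl, hm]
  simp

lemma region_nonempty_iff (ω : Fin n → V →ₗ[ℝ] ℝ) (X : Finset (Fin n) × Finset (Fin n)) :
    ((⋂ i ∈ X.1, Hplus ω i) ∩ (⋂ j ∈ X.2, Hminus ω j)).Nonempty ↔
      ∃ v, (∀ i ∈ X.1, 0 < ω i v) ∧ ∀ j ∈ X.2, ω j v < 0 := by
  simp [Set.Nonempty, Hplus, Hminus]

/-- Gordan's theorem, nontrivial direction: the range of `v ↦ (ω i v)ᵢ` misses the open convex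
set of vectors with the sign conditions of `X`, and the coefficients of a separating functional
give the dependency. -/
lemma exists_dependency (ω : Fin n → V →ₗ[ℝ] ℝ) (X : Finset (Fin n) × Finset (Fin n))
    (hX : Disjoint X.1 X.2)
    (h : (⋂ i ∈ X.1, Hplus ω i) ∩ (⋂ j ∈ X.2, Hminus ω j) = ∅) :
    ∃ l, l ≠ 0 ∧ IsDep ω l ∧ Conform l X := by
  classical
  let s : Set (Fin n → ℝ) := {x | (∀ i ∈ X.1, 0 < x i) ∧ ∀ j ∈ X.2, x j < 0}
  let L : V →ₗ[ℝ] (Fin n → ℝ) := LinearMap.pi ω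
  have hs : Convex ℝ s := by
    intro x hx y hy a b ha hb hab
    refine ⟨fun i hi => ?_, fun i hi => ?_⟩
    · have h1 := hx.1 i hi
      have h2 := hy.1 i hi
      simp only [Pi.add_apply, Pi.smul_apply, smul_eq_mul]
      rcases ha.eq_or_lt with rfl | ha
      · obtain rfl : b = 1 := by linarith
        simpa using h2
      · positivity
    · have h1 := hx.2 i hi
      have h2 := hy.2 i hi
      simp only [Pi.add_apply, Pi.smul_apply, smul_eq_mul]
      rcases ha.eq_or_lt with rfl | ha
      · obtain rfl : b = 1 := by linarith
        simpa using h2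
      · nlinarith
  have hso : IsOpen s := by
    have : s = (⋂ i ∈ X.1, {x | 0 < x i}) ∩ (⋂ j ∈ X.2, {x | x j < 0}) := by
      ext x; simp [s]
    rw [this]
    refine IsOpen.inter ?_ ?_
    · exact isOpen_biInter_finset fun i _ => isOpen_lt continuous_const (continuous_apply i)
    · exact isOpen_biInter_finset fun i _ => isOpen_lt (continuous_apply i) continuous_const
  have hdisj : Disjoint s (LinearMap.range L : Set (Fin n → ℝ)) := by
    rw [Set.disjoint_left]
    rintro x hx ⟨v, rfl⟩
    have := (region_nonempty_iff ω X).2 ⟨v, hx⟩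
    simp [h] at this
  obtain ⟨f, u, hfs, hft⟩ :=
    geometric_hahn_banach_open hs hso (LinearMap.range L).convex hdisj
  have hu : u ≤ 0 := by simpa using hft 0 (Submodule.zero_mem _)
  -- A linear functional bounded below on a subspace vanishes there.
  have hf0 : ∀ v, f (L v) = 0 := by
    intro v
    by_contra hne
    have := hft (L (((u - 1) / f (L v)) • v)) ⟨_, rfl⟩
    rw [map_smul, map_smul, smul_eq_mul, div_mul_cancel₀ _ hne] at this
    linarith
  let x₀ : Fin n → ℝ := fun i => if i ∈ X.1 then 1 else -1
  have hx₀ : x₀ ∈ s := by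
    refine ⟨fun i hi => by simp [x₀, hi], fun i hi => ?_⟩
    have : i ∉ X.1 := fun h' => Finset.disjoint_left.1 hX h' hi
    simp [x₀, this]
  have hsum : ∀ x : Fin n → ℝ, f x = ∑ i, x i * f (Pi.single i 1) := by
    intro x
    conv_lhs => rw [pi_eq_sum_univ' x]
    simp
  -- The ray from `x₀` in direction `c • eᵢ` stays in `s` when `c` has an allowed sign.
  have hray : ∀ i c, (∀ M : ℝ, 0 ≤ M → x₀ + M • Pi.single i c ∈ s) →
      f (Pi.single i c) ≤ 0 := by
    intro i c hM
    by_contra! hpos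
    have h1 := hfs _ (hM (-f x₀ / f (Pi.single i c))
      (div_nonneg (by linarith [hfs _ hx₀]) hpos.le))
    rw [map_add, map_smul, smul_eq_mul, div_mul_cancel₀ _ hpos.ne'] at h1
    linarith
  have hneg : ∀ i, f (Pi.single i (-1)) = - f (Pi.single i 1) := by
    intro i
    rw [Pi.single_neg, map_neg]
  refine ⟨fun i => - f (Pi.single i 1), ?_, ?_, fun i => ⟨fun hi => ?_, fun hi => ?_⟩⟩
  · intro h0
    have h1 : ∀ i, f (Pi.single i 1) = 0 := fun i => by simpa using congrFun h0 i
    have h2 := hfs _ hx₀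
    rw [hsum] at h2
    simp [h1] at h2
    linarith
  · ext v
    have := hf0 v
    rw [hsum] at this
    simp only [LinearMap.sum_apply, LinearMap.smul_apply, smul_eq_mul, LinearMap.zero_apply,
      neg_mul, Finset.sum_neg_distrib, neg_eq_zero]
    rw [← this]
    exact Finset.sum_congr rfl fun i _ => mul_comm _ _
  · by_contra hn
    have := hray i (-1) (fun M hM => ⟨fun j hj => ?_, fun j hj => ?_⟩)
    · rw [hneg] at this
      linarith
    · have : j ≠ i := fun h' => hn (h' ▸ hj)
      simpa [this] using hx₀.1 j hj
    · have h1 := hx₀.2 j hj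
      by_cases hji : j = i
      · subst hji
        simp
        linarith
      · simpa [hji] using h1
  · by_contra hn
    have := hray i 1 (fun M hM => ⟨fun j hj => ?_, fun j hj => ?_⟩)
    · linarith
    · have h1 := hx₀.1 j hj
      by_cases hji : j = i
      · subst hji
        simp
        linarith
      · simpa [hji] using h1
    · have : j ≠ i := fun h' => hn (h' ▸ hj)
      simpa [this] using hx₀.2 j hj

/-- Gordan's theorem, easy direction. -/
lemma infeasible_of_dependency (ω : Fin n → V →ₗ[ℝ] ℝ) (X : Finset (Fin n) × Finset (Fin n))
    (l : Fin n → ℝ) (h0 : l ≠ 0) (hl : IsDep ω l) (hc : Conform l X) :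
    (⋂ i ∈ X.1, Hplus ω i) ∩ (⋂ j ∈ X.2, Hminus ω j) = ∅ := by
  rw [← Set.not_nonempty_iff_eq_empty, region_nonempty_iff]
  rintro ⟨v, hp, hm⟩
  have hterm : ∀ i, l i ≠ 0 → 0 < l i * ω i v := by
    intro i hi
    rcases lt_or_gt_of_ne hi with h | h
    · exact mul_pos_of_neg_of_neg h (hm i ((hc i).2 h))
    · exact mul_pos h (hp i ((hc i).1 h))
  obtain ⟨i, hi⟩ := Function.ne_iff.1 h0
  have : 0 < ∑ i, l i * ω i v := by
    refine Finset.sum_pos' (fun j _ => ?_) ⟨i, Finset.mem_univ _, hterm i hi⟩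
    by_cases hj : l j = 0
    · simp [hj]
    · exact (hterm j hj).le
  rw [hl.apply] at this
  exact lt_irrefl _ this

/-- The signed support of a vector. -/
noncomputable def signSet (l : Fin n → ℝ) : Finset (Fin n) × Finset (Fin n) :=
  (Finset.univ.filter fun i => 0 < l i, Finset.univ.filter fun i => l i < 0)

lemma signSet_disjoint (l : Fin n → ℝ) : Disjoint (signSet l).1 (signSet l).2 := by
  rw [Finset.disjoint_left]
  intro i h1 h2
  simp only [signSet, Finset.mem_filter] at h1 h2
  linarith [h1.2, h2.2]

lemma conform_signSet (l : Fin n → ℝ) : Conform l (signSet l) := by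
  intro i
  simp [signSet]

lemma mem_signSet (l : Fin n → ℝ) (i : Fin n) :
    i ∈ (signSet l).1 ∪ (signSet l).2 ↔ l i ≠ 0 := by
  simp only [signSet, Finset.mem_union, Finset.mem_filter, Finset.mem_univ, true_and]
  rw [or_comm]
  exact lt_or_lt_iff_ne

/-- The support of a circuit carries no nonzero dependency that vanishes at one of its elements. -/
lemma dependency_eq_zero {ω : Fin n → V →ₗ[ℝ] ℝ} {X : Finset (Fin n) × Finset (Fin n)}
    (hX : X ∈ signedCircuits ω) {m : Fin n → ℝ} (hm : IsDep ω m)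
    (hs : ∀ i, m i ≠ 0 → i ∈ X.1 ∪ X.2) {e : Fin n} (he : e ∈ X.1 ∪ X.2) (h0 : m e = 0) :
    m = 0 := by
  by_contra hne
  have h1 := infeasible_of_dependency ω (signSet m) m hne hm (conform_signSet m)
  have h2 := hX.2.2 (signSet m) (signSet_disjoint m) ⟨fun i hi => hs i ((mem_signSet m i).1 hi),
    fun hsub => (mem_signSet m e).1 (hsub he) h0⟩
  rw [h1] at h2
  exact Set.not_nonempty_empty h2

/-- Every circuit is exactly the sign pattern of some dependency. -/
lemma exists_exact {ω : Fin n → V →ₗ[ℝ] ℝ} {X : Finset (Fin n) × Finset (Fin n)}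
    (hX : X ∈ signedCircuits ω) :
    ∃ l, l ≠ 0 ∧ IsDep ω l ∧ ∀ i, (0 < l i ↔ i ∈ X.1) ∧ (l i < 0 ↔ i ∈ X.2) := by
  obtain ⟨l, h0, hl, hc⟩ := exists_dependency ω X hX.1 hX.2.1
  have hs : ∀ i, l i ≠ 0 → i ∈ X.1 ∪ X.2 := by
    intro i hi
    rcases lt_or_gt_of_ne hi with h | h
    · exact Finset.mem_union_right _ ((hc i).2 h)
    · exact Finset.mem_union_left _ ((hc i).1 h)
  have hne : ∀ i ∈ X.1 ∪ X.2, l i ≠ 0 := fun i hi h => h0 (dependency_eq_zero hX hl hs hi h)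
  refine ⟨l, h0, hl, fun i => ⟨⟨(hc i).1, fun hi => ?_⟩, ⟨(hc i).2, fun hi => ?_⟩⟩⟩
  · rcases lt_or_gt_of_ne (hne i (Finset.mem_union_left _ hi)) with h | h
    · exact absurd ((hc i).2 h) (Finset.disjoint_left.1 hX.1 hi)
    · exact h
  · rcases lt_or_gt_of_ne (hne i (Finset.mem_union_right _ hi)) with h | h
    · exact h
    · exact absurd hi (Finset.disjoint_left.1 hX.1 ((hc i).1 h))

/-- Dependencies supported in a circuit are determined up to scaling by one coefficient. -/
lemma eq_smul {ω : Fin n → V →ₗ[ℝ] ℝ} {X : Finset (Fin n) × Finset (Fin n)}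
    (hX : X ∈ signedCircuits ω) {l m : Fin n → ℝ} (hl : IsDep ω l) (hm : IsDep ω m)
    (hsl : ∀ i, l i ≠ 0 → i ∈ X.1 ∪ X.2) (hsm : ∀ i, m i ≠ 0 → i ∈ X.1 ∪ X.2)
    {e : Fin n} (he : e ∈ X.1 ∪ X.2) (i : Fin n) : m e * l i = l e * m i := by
  have := dependency_eq_zero hX (hl.comb hm (m e) (-l e)) (fun i hi => ?_) he (by ring)
  · have := congrFun this i
    simp only [Pi.zero_apply] at this
    linarith
  · by_contra hn
    have h1 : l i = 0 := by
      by_contra h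
      exact hn (hsl i h)
    have h2 : m i = 0 := by
      by_contra h
      exact hn (hsm i h)
    simp [h1, h2] at hi

/-- Conformal reduction: every nonzero dependency has a circuit inside its sign pattern. -/
lemma exists_circuit_conform (ω : Fin n → V →ₗ[ℝ] ℝ) (k : ℕ) : ∀ l : Fin n → ℝ, l ≠ 0 →
    IsDep ω l → (Finset.univ.filter fun i => l i ≠ 0).card = k →
    ∃ Z ∈ signedCircuits ω, (∀ i ∈ Z.1, 0 < l i) ∧ ∀ i ∈ Z.2, l i < 0 := by
  induction k using Nat.strong_induction_on with
  | _ k ih =>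
  intro l h0 hl hk
  by_cases hcirc : signSet l ∈ signedCircuits ω
  · exact ⟨_, hcirc, fun i hi => by simpa [signSet] using hi,
      fun i hi => by simpa [signSet] using hi⟩
  have hinf := infeasible_of_dependency ω (signSet l) l h0 hl (conform_signSet l)
  obtain ⟨Y, hYd, hYs, hYe⟩ : ∃ Y : Finset (Fin n) × Finset (Fin n), Disjoint Y.1 Y.2 ∧
      Y.1 ∪ Y.2 ⊂ (signSet l).1 ∪ (signSet l).2 ∧
      (⋂ i ∈ Y.1, Hplus ω i) ∩ (⋂ j ∈ Y.2, Hminus ω j) = ∅ := by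
    by_contra! hno
    exact hcirc ⟨signSet_disjoint l, hinf, hno⟩
  obtain ⟨m, hm0, hm, hmc⟩ := exists_dependency ω Y hYd hYe
  have hmY : ∀ i, m i ≠ 0 → i ∈ Y.1 ∪ Y.2 := by
    intro i hi
    rcases lt_or_gt_of_ne hi with h | h
    · exact Finset.mem_union_right _ ((hmc i).2 h)
    · exact Finset.mem_union_left _ ((hmc i).1 h)
  have hml : ∀ i, m i ≠ 0 → l i ≠ 0 := fun i hi => (mem_signSet l i).1 (hYs.1 (hmY i hi))
  obtain ⟨a, hal, ham⟩ : ∃ a, l a ≠ 0 ∧ m a = 0 := by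
    obtain ⟨a, ha, ha'⟩ := Finset.exists_of_ssubset hYs
    refine ⟨a, (mem_signSet l a).1 ha, ?_⟩
    by_contra h
    exact ha' (hmY a h)
  -- Up to replacing `m` by `-m`, it agrees in sign with `l` somewhere.
  obtain ⟨p, hp, hpl, hpa, b, hb⟩ : ∃ p : Fin n → ℝ, IsDep ω p ∧ (∀ i, p i ≠ 0 → l i ≠ 0) ∧
      p a = 0 ∧ ∃ b, 0 < p b * l b := by
    obtain ⟨b, hb⟩ := Function.ne_iff.1 hm0
    rcases lt_or_gt_of_ne (mul_ne_zero hb (hml b hb)) with h | h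
    · refine ⟨fun i => (-1) * m i + 0 * m i, hm.comb hm _ _, fun i hi => hml i ?_, by simp [ham],
        b, by nlinarith⟩
      intro h'
      simp [h'] at hi
    · exact ⟨m, hm, hml, ham, b, h⟩
  obtain ⟨c, hc, hmin⟩ := Finset.exists_min_image
    (Finset.univ.filter fun i => 0 < p i * l i) (fun i => l i / p i) ⟨b, by simpa using hb⟩
  simp only [Finset.mem_filter, Finset.mem_univ, true_and] at hc hmin
  have hpc : p c ≠ 0 := by
    rintro h
    simp [h] at hc
  -- The largest step `t` for which `l - t • p` still conforms to `l`.
  obtain ⟨t, ht⟩ : ∃ t, t = l c / p c := ⟨_, rfl⟩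
  have ht0 : 0 < t := by
    have : t = p c * l c / (p c) ^ 2 := by
      rw [ht]
      field_simp
    rw [this]
    positivity
  have key : ∀ i, (0 < l i → 0 ≤ l i - t * p i) ∧ (l i < 0 → l i - t * p i ≤ 0) := by
    intro i
    refine ⟨fun hi => ?_, fun hi => ?_⟩
    · rcases le_or_gt (p i) 0 with h | h
      · nlinarith
      · have := hmin i (mul_pos h hi)
        rw [← ht, le_div_iff₀ h] at this
        linarith
    · rcases le_or_gt 0 (p i) with h | h
      · nlinarith
      · have := hmin i (mul_pos_of_neg_of_neg h hi)
        rw [← ht, le_div_iff_of_neg h] at this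
        linarith
  have hzero : ∀ i, l i = 0 → l i - t * p i = 0 := by
    intro i hi
    have : p i = 0 := by
      by_contra h
      exact hpl i h hi
    simp [hi, this]
  have hq : (fun i => 1 * l i + (-t) * p i) = fun i => l i - t * p i := by
    funext i
    ring
  have hqd := hl.comb hp 1 (-t)
  rw [hq] at hqd
  obtain ⟨Z, hZ, hZ1, hZ2⟩ := ih (Finset.univ.filter fun i => l i - t * p i ≠ 0).card (by
    rw [← hk]
    refine Finset.card_lt_card ((Finset.ssubset_iff_of_subset ?_).2 ⟨c, ?_, ?_⟩)
    · intro i hi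
      simp only [Finset.mem_filter, Finset.mem_univ, true_and] at hi ⊢
      exact fun h => hi (hzero i h)
    · simpa using hpl c hpc
    · simp [ht, hpc]) (fun i => l i - t * p i)
    (fun h => hal (by simpa [hpa] using congrFun h a)) hqd rfl
  refine ⟨Z, hZ, fun i hi => ?_, fun i hi => ?_⟩
  · have h1 := hZ1 i hi
    rcases lt_trichotomy (l i) 0 with h | h | h
    · linarith [(key i).2 h]
    · linarith [hzero i h]
    · exact h
  · have h1 := hZ2 i hi
    rcases lt_trichotomy (l i) 0 with h | h | h
    · exact h
    · linarith [hzero i h]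
    · linarith [(key i).1 h]

lemma region_swap (ω : Fin n → V →ₗ[ℝ] ℝ) (A B : Finset (Fin n)) :
    ((⋂ i ∈ A, Hplus ω i) ∩ (⋂ j ∈ B, Hminus ω j)).Nonempty →
      ((⋂ i ∈ B, Hplus ω i) ∩ (⋂ j ∈ A, Hminus ω j)).Nonempty := by
  intro h
  obtain ⟨v, h1, h2⟩ := (region_nonempty_iff ω (A, B)).1 h
  exact (region_nonempty_iff ω (B, A)).2
    ⟨-v, fun i hi => by simpa using h2 i hi, fun i hi => by simpa using h1 i hi⟩

lemma neg_mem_circuits (ω : Fin n → V →ₗ[ℝ] ℝ) (X : Finset (Fin n) × Finset (Fin n))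
    (hX : X ∈ signedCircuits ω) : (X.2, X.1) ∈ signedCircuits ω := by
  refine ⟨hX.1.symm, ?_, fun Y hY hs => ?_⟩
  · rw [← Set.not_nonempty_iff_eq_empty]
    intro h
    have := region_swap ω _ _ h
    rw [hX.2.1] at this
    exact Set.not_nonempty_empty this
  · exact hX.2.2 Y hY (by rwa [Finset.union_comm X.1])

lemma mem_support_of_exact {X : Finset (Fin n) × Finset (Fin n)} {l : Fin n → ℝ}
    (h : ∀ i, (0 < l i ↔ i ∈ X.1) ∧ (l i < 0 ↔ i ∈ X.2)) (i : Fin n) :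
    i ∈ X.1 ∪ X.2 ↔ l i ≠ 0 := by
  rw [Finset.mem_union, ← (h i).1, ← (h i).2, or_comm]
  exact lt_or_lt_iff_ne

/-- For proportional vectors `l = c • m` with sign patterns `X` and `Y`, the sign of the ratio `c`
decides between `X = Y` and `X = -Y`. -/
lemma circuits_eq_or_neg {X Y : Finset (Fin n) × Finset (Fin n)}
    {l m : Fin n → ℝ} (hl : ∀ i, (0 < l i ↔ i ∈ X.1) ∧ (l i < 0 ↔ i ∈ X.2))
    (hm : ∀ i, (0 < m i ↔ i ∈ Y.1) ∧ (m i < 0 ↔ i ∈ Y.2)) (c : ℝ) :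
    ((0 < c ∧ ∀ i, l i = c * m i) → X = Y) ∧ ((c < 0 ∧ ∀ i, l i = c * m i) → X = (Y.2, Y.1)) := by
  refine ⟨fun ⟨hc, h⟩ => ?_, fun ⟨hc, h⟩ => ?_⟩
  · ext i
    · rw [← (hl i).1, ← (hm i).1, h, mul_pos_iff_of_pos_left hc]
    · rw [← (hl i).2, ← (hm i).2, h]
      exact ⟨fun h => neg_of_mul_neg_right h hc.le, fun h => mul_neg_of_pos_of_neg hc h⟩
  · ext i
    · rw [← (hl i).1, ← (hm i).2, h]
      exact ⟨fun h => neg_of_mul_pos_right h hc.le, fun h => mul_pos_of_neg_of_neg hc h⟩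
    · rw [← (hl i).2, ← (hm i).1, h]
      exact ⟨fun h => pos_of_mul_neg_right h hc.le, fun h => mul_neg_of_neg_of_pos hc h⟩

/-- For a central arrangement given by nonzero pairwise
non-proportional linear forms, `𝒞(𝒜)` satisfies the four signed-circuit axioms of a
loop-free oriented matroid on `{1,…,n}`. -/
theorem signedCircuits_oriented_matroid (ω : Fin n → V →ₗ[ℝ] ℝ)
    (hω : ∀ i, ω i ≠ 0)
    (hprop : ∀ i j : Fin n, i ≠ j → ∀ c : ℝ, ω i ≠ c • ω j) :
    (∀ X ∈ signedCircuits ω, 1 < (X.1 ∪ X.2).card) ∧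
    (∀ X : Finset (Fin n) × Finset (Fin n),
      X ∈ signedCircuits ω ↔ (X.2, X.1) ∈ signedCircuits ω) ∧
    (∀ X ∈ signedCircuits ω, ∀ Y ∈ signedCircuits ω,
      X.1 ∪ X.2 ⊆ Y.1 ∪ Y.2 → X = Y ∨ X = (Y.2, Y.1)) ∧
    (∀ X ∈ signedCircuits ω, ∀ Y ∈ signedCircuits ω, X ≠ (Y.2, Y.1) →
      ∀ e ∈ X.1 ∩ Y.2, ∃ Z ∈ signedCircuits ω,
        Z.1 ⊆ (X.1 ∪ Y.1).erase e ∧ Z.2 ⊆ (X.2 ∪ Y.2).erase e) := by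
  refine ⟨?_, ?_, ?_, ?_⟩
  · intro X hX
    obtain ⟨l, h0, hl, hs⟩ := exists_exact hX
    obtain ⟨i, hi⟩ := Function.ne_iff.1 h0
    by_contra! hcard
    have hz : ∀ j, j ≠ i → l j = 0 := by
      intro j hj
      by_contra h
      exact hj (Finset.card_le_one.1 hcard j ((mem_support_of_exact hs j).2 h) i
        ((mem_support_of_exact hs i).2 hi))
    unfold IsDep at hl
    rw [Finset.sum_eq_single i (fun j _ hj => by simp [hz j hj]) (by simp)] at hl
    exact (smul_ne_zero hi (hω i)) hl
  · exact fun X => ⟨neg_mem_circuits ω X, fun h => neg_mem_circuits ω _ h⟩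
  · intro X hX Y hY hsub
    obtain ⟨l, h0, hl, hsl⟩ := exists_exact hX
    obtain ⟨m, -, hm, hsm⟩ := exists_exact hY
    obtain ⟨e, he⟩ := Function.ne_iff.1 h0
    have heY := hsub ((mem_support_of_exact hsl e).2 he)
    have hme := (mem_support_of_exact hsm e).1 heY
    have hprop' := eq_smul hY hl hm (fun i hi => hsub ((mem_support_of_exact hsl i).2 hi))
      (fun i hi => (mem_support_of_exact hsm i).2 hi) heY
    have h : ∀ i, l i = l e / m e * m i := by
      intro i
      have := hprop' i
      field_simp
      linarith
    have hcases := circuits_eq_or_neg hsl hsm (l e / m e)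
    rcases lt_or_gt_of_ne (div_ne_zero he hme) with hc | hc
    · exact Or.inr (hcases.2 ⟨hc, h⟩)
    · exact Or.inl (hcases.1 ⟨hc, h⟩)
  · intro X hX Y hY hne e he
    obtain ⟨l, -, hl, hsl⟩ := exists_exact hX
    obtain ⟨m, -, hm, hsm⟩ := exists_exact hY
    rw [Finset.mem_inter] at he
    have hle := (hsl e).1.2 he.1
    have hme := (hsm e).2.2 he.2
    -- If the combination vanishes, the two dependencies are negatively proportional.
    have hne0 : (fun i => -m e * l i + l e * m i) ≠ 0 := by
      refine fun h => hne ((circuits_eq_or_neg hsl hsm (l e / m e)).2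
        ⟨div_neg_of_pos_of_neg hle hme, fun i => ?_⟩)
      have := congrFun h i
      simp only [Pi.zero_apply] at this
      have hme' := hme.ne
      field_simp
      linarith
    obtain ⟨Z, hZ, hZ1, hZ2⟩ := exists_circuit_conform ω _ _ hne0
      (hl.comb hm (-m e) (l e)) rfl
    refine ⟨Z, hZ, fun i hi => ?_, fun i hi => ?_⟩
    · have h1 := hZ1 i hi
      rw [Finset.mem_erase, Finset.mem_union, ← (hsl i).1, ← (hsm i).1]
      refine ⟨?_, ?_⟩
      · rintro rfl
        linarith
      · by_contra! hn
        nlinarith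
    · have h1 := hZ2 i hi
      rw [Finset.mem_erase, Finset.mem_union, ← (hsl i).2, ← (hsm i).2]
      refine ⟨?_, ?_⟩
      · rintro rfl
        linarith
      · by_contra! hn
        nlinarith
end
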